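/- Let A, φ : Ω → (Fin 4 → Matrix (Fin n) (Fin n) ℂ) be smooth maps on an open set Ω ⊆ ℝ⁴ satisfying the KW equations. Define five-dimensional fields on Ω, independent of an auxiliary time coordinate x₀ (so ∂₀ ≡ 0): the connection components 𝔸₀ := −φ₄, 𝔸_a := A_a for a = 1,2,3, 𝔸_y := A₄; and the antisymmetric array B_{μν} for μ,ν ∈ {0,1,2,3} with B_{0a} := φ_a and B_{ab} := Σ_c ε_{abc} φ_c. Let 𝔽 denote the curvature of 𝔸 computed with ∂₀ ≡ 0 (e.g. 𝔽_{0a} = −∂_a𝔸₀ + [𝔸₀,𝔸_a], 𝔽_{y0} = ∂₄𝔸₀ + [𝔸_y, 𝔸₀], 𝔽_{ab}, 𝔽_{yb} as usual), let (𝔽⁺)_{μν} = (1/2)( 𝔽_{μν} + (1/2) Σ_{σ,τ} ε°_{μνστ} 𝔽_{στ} ) where ε°is the Levi-Civita symbol on indices {0,1,2,3} with ε°₀₁₂₃ = 1, let (B×B)_{μν} = Σ_{σ=0}^{3} [B_{μσ}, B_{νσ}], and let D_ν act by D_ν X = ∂_ν X + [𝔸_ν, X] (with ∂₀ ≡ 0)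 and D_y X = ∂₄ X + [𝔸_y, X]. Then on Ω: (𝔽⁺)_{μν} − (1/4)(B×B)_{μν} − (1/2) D_y B_{μν} = 0 for all μ,ν ∈ {0,1,2,3}, and 𝔽_{yμ} + Σ_{ν=0}^{3} D_ν B_{νμ} = 0 for all μ ∈ {0,1,2,3}. (Every solution of the four-dimensional KW equations yields a time-independent solution of the five-dimensional equations.) -/

import Mathlib

attribute [local instance] Matrix.normedAddCommGroup Matrix.normedSpace

/-- The Levi-Civita symbol on three indices, with `ε₀₁₂ = 1`. -/
noncomputable def eps3 (a b c : Fin 3) : ℂ :=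
  ((((c.val : ℤ) - (b.val : ℤ)) * ((c.val : ℤ) - (a.val : ℤ)) *
      ((b.val : ℤ) - (a.val : ℤ)) : ℤ) : ℂ) / 2

/-- The Levi-Civita symbol on four indices, with `ε₀₁₂₃ = 1`. -/
noncomputable def eps4 (i j k l : Fin 4) : ℂ :=
  ((((l.val : ℤ) - (k.val : ℤ)) * ((l.val : ℤ) - (j.val : ℤ)) * ((l.val : ℤ) - (i.val : ℤ)) *
      ((k.val : ℤ) - (j.val : ℤ)) * ((k.val : ℤ) - (i.val : ℤ)) *
      ((j.val : ℤ) - (i.val : ℤ)) : ℤ) : ℂ) / 12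

/-- Partial derivative in the `i`-th coordinate direction (coordinates `x₁,…,x₄` of `ℝ⁴`,
zero-indexed; index `3` is `y = x₄`). -/
noncomputable def pd4 {n : ℕ} (i : Fin 4) (f : (Fin 4 → ℝ) → Matrix (Fin n) (Fin n) ℂ)
    (x : Fin 4 → ℝ) : Matrix (Fin n) (Fin n) ℂ :=
  deriv (fun t => f (Function.update x i t)) (x i)

/-- The curvature `F_{ij} = ∂_i A_j − ∂_j A_i + [A_i, A_j]` of a 4d connection. -/
noncomputable def curv {n : ℕ} (A : (Fin 4 → ℝ) → Fin 4 → Matrix (Fin n) (Fin n) ℂ)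
    (i j : Fin 4) (x : Fin 4 → ℝ) : Matrix (Fin n) (Fin n) ℂ :=
  pd4 i (fun x => A x j) x - pd4 j (fun x => A x i) x + (A x i * A x j - A x j * A x i)

/-- The covariant derivative `D_i φ_j = ∂_i φ_j + [A_i, φ_j]` in 4d. -/
noncomputable def covD {n : ℕ} (A φ : (Fin 4 → ℝ) → Fin 4 → Matrix (Fin n) (Fin n) ℂ)
    (i j : Fin 4) (x : Fin 4 → ℝ) : Matrix (Fin n) (Fin n) ℂ :=
  pd4 i (fun x => φ x j) x + (A x i * φ x j - φ x j * A x i)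

/-- The 5d connection components `𝔸_μ`, `μ ∈ {0,1,2,3}` (index `0` is time):
`𝔸₀ = −φ₄`, `𝔸_a = A_a` for `a = 1,2,3`. -/
noncomputable def A5 {n : ℕ} (A φ : (Fin 4 → ℝ) → Fin 4 → Matrix (Fin n) (Fin n) ℂ)
    (x : Fin 4 → ℝ) (μ : Fin 4) : Matrix (Fin n) (Fin n) ℂ :=
  if μ.val = 0 then -φ x 3 else A x ⟨μ.val - 1, by have := μ.isLt; omega⟩

/-- The 5d antisymmetric field `B_{μν}`: `B_{0a} = φ_a`, `B_{a0} = −φ_a`,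
`B_{ab} = Σ_c ε_{abc} φ_c` (5d spatial index `a ∈ {1,2,3}` corresponds to `φ` index
`a−1 ∈ {0,1,2}`). -/
noncomputable def B5 {n : ℕ} (φ : (Fin 4 → ℝ) → Fin 4 → Matrix (Fin n) (Fin n) ℂ)
    (x : Fin 4 → ℝ) (μ ν : Fin 4) : Matrix (Fin n) (Fin n) ℂ :=
  if hμ : μ.val = 0 then
    (if hν : ν.val = 0 then 0 else φ x ⟨ν.val - 1, by have := ν.isLt; omega⟩)
  else if hν : ν.val = 0 then
    -φ x ⟨μ.val - 1, by have := μ.isLt; omega⟩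
  else
    ∑ c : Fin 3,
      eps3 ⟨μ.val - 1, by have := μ.isLt; omega⟩ ⟨ν.val - 1, by have := ν.isLt; omega⟩ c
        • φ x ⟨c.val, by have := c.isLt; omega⟩

/-- The 5d partial derivative `∂_μ`, `μ ∈ {0,1,2,3}`, for time-independent fields:
`∂₀ ≡ 0`, and `∂_a` is the derivative in the `a`-th spatial coordinate. -/
noncomputable def pd5 {n : ℕ} (μ : Fin 4) (f : (Fin 4 → ℝ) → Matrix (Fin n) (Fin n) ℂ)
    (x : Fin 4 → ℝ) : Matrix (Fin n) (Fin n) ℂ :=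
  if μ.val = 0 then 0 else pd4 ⟨μ.val - 1, by have := μ.isLt; omega⟩ f x

/-- The curvature `𝔽_{μν}` of the 5d connection `𝔸` (with `∂₀ ≡ 0`). -/
noncomputable def F5 {n : ℕ} (A φ : (Fin 4 → ℝ) → Fin 4 → Matrix (Fin n) (Fin n) ℂ)
    (μ ν : Fin 4) (x : Fin 4 → ℝ) : Matrix (Fin n) (Fin n) ℂ :=
  pd5 μ (fun x => A5 A φ x ν) x - pd5 ν (fun x => A5 A φ x μ) x
    + (A5 A φ x μ * A5 A φ x ν - A5 A φ x ν * A5 A φ x μ)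

/-- The curvature component `𝔽_{yμ} = ∂_y 𝔸_μ − ∂_μ 𝔸_y + [𝔸_y, 𝔸_μ]`, where `𝔸_y = A₄`. -/
noncomputable def F5y {n : ℕ} (A φ : (Fin 4 → ℝ) → Fin 4 → Matrix (Fin n) (Fin n) ℂ)
    (μ : Fin 4) (x : Fin 4 → ℝ) : Matrix (Fin n) (Fin n) ℂ :=
  pd4 3 (fun x => A5 A φ x μ) x - pd5 μ (fun x => A x 3) x
    + (A x 3 * A5 A φ x μ - A5 A φ x μ * A x 3)

theorem pd4_neg {n : ℕ} (i : Fin 4) (f : (Fin 4 → ℝ) → Matrix (Fin n) (Fin n) ℂ)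
    (x : Fin 4 → ℝ) : pd4 i (fun x => -f x) x = -pd4 i f x :=
  deriv.fun_neg

theorem pd4_zero {n : ℕ} (i : Fin 4) (x : Fin 4 → ℝ) :
    pd4 i (fun _ => (0 : Matrix (Fin n) (Fin n) ℂ)) x = 0 :=
  deriv_const _ _

/-- The array `B5` in components: the entries are `0` and `±φ₁`, `±φ₂`, `±φ₃`. -/
theorem B5_eq {n : ℕ} (φ : (Fin 4 → ℝ) → Fin 4 → Matrix (Fin n) (Fin n) ℂ)
    (x : Fin 4 → ℝ) (μ ν : Fin 4) :
    B5 φ x μ ν =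
      (![![0, φ x 0, φ x 1, φ x 2],
         ![-φ x 0, 0, φ x 2, -φ x 1],
         ![-φ x 1, -φ x 2, 0, φ x 0],
         ![-φ x 2, φ x 1, -φ x 0, 0]] : Fin 4 → Fin 4 → Matrix (Fin n) (Fin n) ℂ) μ ν := by
  fin_cases μ <;> fin_cases ν <;> norm_num [B5, eps3, Fin.sum_univ_three] <;> rfl

/-- The connection `A5` in components. -/
theorem A5_eq {n : ℕ} (A φ : (Fin 4 → ℝ) → Fin 4 → Matrix (Fin n) (Fin n) ℂ)
    (x : Fin 4 → ℝ) (μ : Fin 4) :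
    A5 A φ x μ = (![-φ x 3, A x 0, A x 1, A x 2] : Fin 4 → Matrix (Fin n) (Fin n) ℂ) μ := by
  fin_cases μ <;> rfl

/-- The derivatives `pd5` in components. -/
theorem pd5_eq {n : ℕ} (μ : Fin 4) (f : (Fin 4 → ℝ) → Matrix (Fin n) (Fin n) ℂ)
    (x : Fin 4 → ℝ) :
    pd5 μ f x = (![0, pd4 0 f x, pd4 1 f x, pd4 2 f x] : Fin 4 → Matrix (Fin n) (Fin n) ℂ) μ := by
  fin_cases μ <;> rfl

/-- Every solution of the four-dimensional KW equations yields a time-independent solution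
of the five-dimensional equations `𝔽⁺ − (1/4)B×B − (1/2)D_yB = 0`,
`𝔽_{yμ} + DᵛB_{νμ} = 0`. -/
theorem KW_solution_gives_five_dim_solution {n : ℕ} (Ω : Set (Fin 4 → ℝ)) (hΩ : IsOpen Ω)
    (A φ : (Fin 4 → ℝ) → Fin 4 → Matrix (Fin n) (Fin n) ℂ)
    (hA : ∀ i, ContDiffOn ℝ (⊤ : ℕ∞) (fun x => A x i) Ω)
    (hφ : ∀ i, ContDiffOn ℝ (⊤ : ℕ∞) (fun x => φ x i) Ω)
    (hKW1 : ∀ x ∈ Ω, ∀ i j : Fin 4,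
      curv A i j x - (φ x i * φ x j - φ x j * φ x i)
        + ∑ k, ∑ l, eps4 i j k l • covD A φ k l x = 0)
    (hKW2 : ∀ x ∈ Ω, ∑ i, covD A φ i i x = 0) :
    ∀ x ∈ Ω,
      (∀ μ ν : Fin 4,
        (1 / 2 : ℂ) • (F5 A φ μ ν x + (1 / 2 : ℂ) • ∑ σ, ∑ τ, eps4 μ ν σ τ • F5 A φ σ τ x)
          - (1 / 4 : ℂ) • ∑ σ, (B5 φ x μ σ * B5 φ x ν σ - B5 φ x ν σ * B5 φ x μ σ)
          - (1 / 2 : ℂ) • (pd4 3 (fun x => B5 φ x μ ν) x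
              + (A x 3 * B5 φ x μ ν - B5 φ x μ ν * A x 3)) = 0)
      ∧ (∀ μ : Fin 4,
        F5y A φ μ x
          + ∑ ν, (pd5 ν (fun x => B5 φ x ν μ) x
              + (A5 A φ x ν * B5 φ x ν μ - B5 φ x ν μ * A5 A φ x ν)) = 0) := by
  intro x hx
  have h01 := hKW1 x hx 0 1
  have h02 := hKW1 x hx 0 2
  have h12 := hKW1 x hx 1 2
  have h30 := hKW1 x hx 3 0
  have h31 := hKW1 x hx 3 1
  have h32 := hKW1 x hx 3 2
  have hdiv := hKW2 x hx
  norm_num [curv, covD, eps4, Fin.sum_univ_four] at h01 h02 h12 h30 h31 h32 hdiv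
  constructor
  · intro μ ν
    fin_cases μ <;> fin_cases ν <;>
      simp [F5, A5_eq, B5_eq, pd5_eq, eps4, Fin.sum_univ_four, pd4_neg, pd4_zero]
    · linear_combination (norm := module) (1 / 2 : ℂ) • h12
    · linear_combination (norm := module) (-1 / 2 : ℂ) • h02
    · linear_combination (norm := module) (1 / 2 : ℂ) • h01
    · linear_combination (norm := module) (-1 / 2 : ℂ) • h12
    · linear_combination (norm := module) (1 / 2 : ℂ) • h01
    · linear_combination (norm := module) (1 / 2 : ℂ) • h02
    · linear_combination (norm := module) (1 / 2 : ℂ) • h02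
    · linear_combination (norm := module) (-1 / 2 : ℂ) • h01
    · linear_combination (norm := module) (1 / 2 : ℂ) • h12
    · linear_combination (norm := module) (-1 / 2 : ℂ) • h01
    · linear_combination (norm := module) (-1 / 2 : ℂ) • h02
    · linear_combination (norm := module) (-1 / 2 : ℂ) • h12
  · intro μ
    fin_cases μ <;>
      simp [F5y, A5_eq, B5_eq, pd5_eq, Fin.sum_univ_four, pd4_neg, pd4_zero]
    · linear_combination (norm := module) -hdiv
    · linear_combination (norm := module) h30
    · linear_combination (norm := module) h31
    · linear_combination (norm := module) h32
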